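/- The FTR power CDF conditioned on θ satisfies: for the Rician Shadowed law with parameters m (positive integer), K_r ≥ 0, mean γ̄ > 0, F(x) = ((1+K_r)/γ̄)·x·(m/(m+K_r))^m · Φ₂(1-m, m; 2; -(1+K_r)x/γ̄, -(1+K_r)m x/(γ̄(m+K_r))), where Φ₂(b₁,b₂;c;x,y) = Σ_{i,j≥0} (b₁)_i (b₂)_j/((c)_{i+j} i! j!) x^i y^j is the bivariate confluent hypergeometric function. -/

import Mathlib

open Real MeasureTheory Set

noncomputable def poch (a : ℝ) (n : ℕ) : ℝ := (ascPochhammer ℝ n).eval a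

/-- Confluent hypergeometric function of the first kind (series). -/
noncomputable def hyp1F1 (a c z : ℝ) : ℝ :=
  ∑' k : ℕ, poch a k / (poch c k * (k.factorial : ℝ)) * z ^ k

/-- Bivariate confluent hypergeometric function Φ₂. -/
noncomputable def phi2 (b₁ b₂ c x y : ℝ) : ℝ :=
  ∑' p : ℕ × ℕ,
    poch b₁ p.1 * poch b₂ p.2 /
      (poch c (p.1 + p.2) * (p.1.factorial : ℝ) * (p.2.factorial : ℝ)) *
      x ^ p.1 * y ^ p.2

/-!
Set `c = 1`, `u = -(1 + K_r) / γ̄` and `v = m u / (m + K_r)`, so that up to a constant factor the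
density is `exp (u t) * ₁F₁(m; c; (v - u) t)`. A generalized Vandermonde identity says that the
Cauchy product of the two series, grouped by total degree, is the double series
`Φ₂(c - m, m; c; u t, v t)`. Integrating this against `t ^ (c - 1)` term by term produces the
factors `1 / (c + i + j)`, and `(c)_{i+j} (c + i + j) = c (c + 1)_{i+j}` raises `c` to `c + 1`.
-/

open scoped Nat
open Finset.HasAntidiagonal (antidiagonal mem_antidiagonal)

section Pochhammer

variable {R : Type*} [CommSemiring R]

theorem ascPochhammer_eval_succ_left (a : R) (n : ℕ) :
    (ascPochhammer R (n + 1)).eval a = a * (ascPochhammer R n).eval (a + 1) := by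
  simp [ascPochhammer_succ_left]

theorem ascPochhammer_eval_add_index (a : R) (m n : ℕ) :
    (ascPochhammer R (m + n)).eval a =
      (ascPochhammer R m).eval a * (ascPochhammer R n).eval (a + m) := by
  simp [← ascPochhammer_mul]

theorem sum_antidiagonal_choose_succ_mul_eq_sum_add (f : ℕ → ℕ → R) (n : ℕ) :
    ∑ p ∈ antidiagonal (n + 1), ((n + 1).choose p.1 : R) * f p.1 p.2 =
      ∑ p ∈ antidiagonal n, (n.choose p.1 : R) * (f p.1 (p.2 + 1) + f (p.1 + 1) p.2) := by
  simp only [Finset.sum_antidiagonal_choose_succ_mul, mul_add, Finset.sum_add_distrib]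
  congr 1
  refine Finset.sum_congr rfl fun p hp => ?_
  rw [n.choose_symm_of_eq_add (mem_antidiagonal.1 hp).symm]

/-- At `u = 1`, `w = 0` this is the Chu–Vandermonde identity. -/
theorem sum_choose_mul_ascPochhammer_mul_ascPochhammer (a b u w : R) (n : ℕ) :
    ∑ p ∈ antidiagonal n, (n.choose p.1 : R) *
        ((ascPochhammer R p.1).eval a * (ascPochhammer R p.2).eval b *
          (u ^ p.1 * (u + w) ^ p.2)) =
      ∑ p ∈ antidiagonal n, (n.choose p.1 : R) *
        ((ascPochhammer R p.1).eval b * (ascPochhammer R p.2).eval (a + b + p.1) *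
          (w ^ p.1 * u ^ p.2)) := by
  induction n generalizing a b with
  | zero => simp
  | succ n ih =>
    -- Both sides satisfy `S (n + 1) a b = b (u + w) S n a (b + 1) + a u S n (a + 1) b`.
    rw [sum_antidiagonal_choose_succ_mul_eq_sum_add fun i j =>
        (ascPochhammer R i).eval a * (ascPochhammer R j).eval b * (u ^ i * (u + w) ^ j),
      sum_antidiagonal_choose_succ_mul_eq_sum_add fun i j =>
        (ascPochhammer R i).eval b * (ascPochhammer R j).eval (a + b + i) * (w ^ i * u ^ j)]
    calc
      _ = b * (u + w) * ∑ p ∈ antidiagonal n, (n.choose p.1 : R) *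
            ((ascPochhammer R p.1).eval a * (ascPochhammer R p.2).eval (b + 1) *
              (u ^ p.1 * (u + w) ^ p.2)) +
          a * u * ∑ p ∈ antidiagonal n, (n.choose p.1 : R) *
            ((ascPochhammer R p.1).eval (a + 1) * (ascPochhammer R p.2).eval b *
              (u ^ p.1 * (u + w) ^ p.2)) := by
        simp only [Finset.mul_sum, ← Finset.sum_add_distrib, ascPochhammer_eval_succ_left]
        exact Finset.sum_congr rfl fun p _ => by ring
      _ = _ := by
        rw [ih, ih]
        simp only [Finset.mul_sum, ← Finset.sum_add_distrib]
        refine Finset.sum_congr rfl fun p _ => ?_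
        have split_factor : (ascPochhammer R p.1).eval b * (a + b + p.1) =
            a * (ascPochhammer R p.1).eval b + b * (ascPochhammer R p.1).eval (b + 1) := by
          rw [← ascPochhammer_eval_succ_left, ascPochhammer_succ_eval]
          ring
        have shift_right : a + (b + 1) + p.1 = a + b + p.1 + 1 := by ring
        have shift_left : a + 1 + b + p.1 = a + b + p.1 + 1 := by ring
        have shift_succ : a + b + ((p.1 + 1 : ℕ) : R) = a + b + p.1 + 1 := by push_cast; ring
        rw [shift_right, shift_left, shift_succ, ascPochhammer_eval_succ_left _ p.2,
          ← mul_assoc (Polynomial.eval b _), split_factor, ascPochhammer_eval_succ_left b]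
        ring

end Pochhammer

theorem tsum_eq_tsum_sum_antidiagonal {A α : Type*} [AddCommMonoid A] [Finset.HasAntidiagonal A]
    [AddCommMonoid α] [TopologicalSpace α] [ContinuousAdd α] [T3Space α]
    {f : A × A → α} (hf : Summable f) :
    ∑' p, f p = ∑' n, ∑ p ∈ antidiagonal n, f p := by
  let e := Finset.HasAntidiagonal.sigmaAntidiagonalEquivProd (A := A)
  have summable_fiberwise : Summable fun q => f (e q) := e.summable_iff.mpr hf
  rw [← e.tsum_eq f, summable_fiberwise.tsum_sigma' fun _ => (hasSum_fintype _).summable]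
  refine tsum_congr fun n => ?_
  rw [tsum_fintype]
  exact Finset.sum_coe_sort (antidiagonal n) f

theorem natCast_ne_neg_of_pos {c : ℝ} (hc : 0 < c) (k : ℕ) : (k : ℝ) ≠ -c := by
  linarith [k.cast_nonneg (α := ℝ)]

theorem poch_ne_zero {c : ℝ} (hc : ∀ k : ℕ, (k : ℝ) ≠ -c) (n : ℕ) : poch c n ≠ 0 := by
  rw [poch, Ne, ascPochhammer_eval_eq_zero_iff]
  rintro ⟨k, -, hk⟩
  exact hc k hk

theorem abs_poch_le (b : ℝ) (n : ℕ) : |poch b n| ≤ (|b| + 1) ^ n * (n ! : ℝ) := by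
  induction n with
  | zero => simp [poch]
  | succ n ih =>
    have factor_le : |b + n| ≤ (|b| + 1) * (n + 1) := by
      have := abs_add_le b n
      rw [Nat.abs_cast] at this
      nlinarith [mul_nonneg (abs_nonneg b) n.cast_nonneg]
    calc |poch b (n + 1)| = |poch b n| * |b + n| := by
          rw [poch, ascPochhammer_succ_eval, abs_mul, poch]
      _ ≤ (|b| + 1) ^ n * (n ! : ℝ) * ((|b| + 1) * (n + 1)) := by gcongr
      _ = (|b| + 1) ^ (n + 1) * ((n + 1)! : ℝ) := by
          rw [Nat.factorial_succ]
          push_cast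
          ring

theorem exists_factorial_le_pow_mul_abs_poch {c : ℝ} (hc : ∀ k : ℕ, (k : ℝ) ≠ -c) :
    ∃ ρ : ℝ, 0 ≤ ρ ∧ ∀ n : ℕ, (n ! : ℝ) ≤ ρ ^ n * |poch c n| := by
  have ratio_tendsto := (tendsto_add_mul_div_add_mul_atTop_nhds 1 c 1 (one_ne_zero (α := ℝ))).abs
  obtain ⟨ρ, hρ⟩ := ratio_tendsto.bddAbove_range
  have ratio_le (k : ℕ) : |(1 + 1 * k) / (c + 1 * k)| ≤ ρ := hρ ⟨k, rfl⟩
  have succ_le (k : ℕ) : (k : ℝ) + 1 ≤ ρ * |c + k| := by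
    have hck : c + k ≠ 0 := fun h => hc k (by linarith)
    have := ratio_le k
    rwa [one_mul, abs_div, div_le_iff₀ (abs_pos.mpr hck), abs_of_nonneg (by positivity),
      add_comm] at this
  have hρ_nonneg : 0 ≤ ρ := (abs_nonneg _).trans (ratio_le 0)
  refine ⟨ρ, hρ_nonneg, fun n => ?_⟩
  induction n with
  | zero => simp [poch]
  | succ n ih =>
    calc ((n + 1)! : ℝ) = (n ! : ℝ) * (n + 1) := by
          rw [Nat.factorial_succ]
          push_cast
          ring
      _ ≤ ρ ^ n * |poch c n| * (ρ * |c + n|) := by gcongr; exact succ_le n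
      _ = ρ ^ (n + 1) * |poch c (n + 1)| := by
          rw [poch, poch, ascPochhammer_succ_eval, abs_mul]
          ring

/-- The coefficient of `x ^ p.1 * y ^ p.2` in `Φ₂(b₁, b₂; c; x, y)`. -/
noncomputable def phi2Coeff (b₁ b₂ c : ℝ) (p : ℕ × ℕ) : ℝ :=
  poch b₁ p.1 * poch b₂ p.2 / (poch c (p.1 + p.2) * (p.1 ! : ℝ) * (p.2 ! : ℝ))

theorem phi2_eq_tsum (b₁ b₂ c x y : ℝ) :
    phi2 b₁ b₂ c x y = ∑' p : ℕ × ℕ, phi2Coeff b₁ b₂ c p * x ^ p.1 * y ^ p.2 := rfl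

section Series

variable {c : ℝ} (b₁ b₂ b x y u v : ℝ)

theorem summable_phi2 (hc : ∀ k : ℕ, (k : ℝ) ≠ -c) :
    Summable fun p : ℕ × ℕ => phi2Coeff b₁ b₂ c p * x ^ p.1 * y ^ p.2 := by
  obtain ⟨ρ, hρ, factorial_le⟩ := exists_factorial_le_pow_mul_abs_poch hc
  have inv_abs_poch_le (i j : ℕ) : |poch c (i + j)|⁻¹ ≤ ρ ^ (i + j) / (i ! * j !) := by
    have hpos : 0 < |poch c (i + j)| := abs_pos.mpr (poch_ne_zero hc _)
    rw [inv_le_iff_one_le_mul₀ hpos, div_mul_eq_mul_div, one_le_div (by positivity)]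
    refine le_trans ?_ (factorial_le (i + j))
    exact_mod_cast Nat.le_of_dvd (Nat.factorial_pos _)
      (Nat.factorial_mul_factorial_dvd_factorial_add i j)
  have majorant := (Real.summable_pow_div_factorial ((|b₁| + 1) * ρ * |x|)).mul_of_nonneg
    (Real.summable_pow_div_factorial ((|b₂| + 1) * ρ * |y|))
    (fun _ => by positivity) (fun _ => by positivity)
  refine majorant.of_norm_bounded fun ⟨i, j⟩ => ?_
  calc ‖phi2Coeff b₁ b₂ c (i, j) * x ^ i * y ^ j‖
      = |poch b₁ i| / i ! * (|poch b₂ j| / j !) * |poch c (i + j)|⁻¹ * |x| ^ i * |y| ^ j := by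
        simp only [phi2Coeff, Real.norm_eq_abs, abs_mul, abs_div, abs_pow, Nat.abs_cast]
        field_simp
    _ ≤ (|b₁| + 1) ^ i * (|b₂| + 1) ^ j * (ρ ^ (i + j) / (i ! * j !)) * |x| ^ i * |y| ^ j := by
        gcongr
        · exact div_le_of_le_mul₀ (by positivity) (by positivity) (abs_poch_le b₁ i)
        · exact div_le_of_le_mul₀ (by positivity) (by positivity) (abs_poch_le b₂ j)
        · exact inv_abs_poch_le i j
    _ = ((|b₁| + 1) * ρ * |x|) ^ i / i ! * (((|b₂| + 1) * ρ * |y|) ^ j / j !) := by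
        simp only [mul_pow]
        ring

theorem summable_hyp1F1 (hc : ∀ k : ℕ, (k : ℝ) ≠ -c) :
    Summable fun k : ℕ => poch b k / (poch c k * (k ! : ℝ)) * x ^ k := by
  have row := (summable_phi2 b 0 x 0 hc).comp_injective (Prod.mk_left_injective 0)
  simpa [Function.comp_def, phi2Coeff, poch] using row

theorem sum_antidiagonal_phi2Coeff (hc : ∀ k : ℕ, (k : ℝ) ≠ -c) (n : ℕ) :
    ∑ p ∈ antidiagonal n, phi2Coeff (c - b) b c p * u ^ p.1 * v ^ p.2 =
      ∑ p ∈ antidiagonal n,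
        poch b p.1 / (poch c p.1 * (p.1 ! : ℝ)) * (v - u) ^ p.1 * (u ^ p.2 / (p.2 ! : ℝ)) := by
  have vandermonde := sum_choose_mul_ascPochhammer_mul_ascPochhammer (c - b) b u (v - u) n
  simp only [add_sub_cancel, sub_add_cancel] at vandermonde
  apply_fun (· / (poch c n * n !)) at vandermonde
  rw [Finset.sum_div, Finset.sum_div] at vandermonde
  convert vandermonde using 2 with p hp p hp
  all_goals
    obtain rfl := mem_antidiagonal.1 hp
    have hchoose : ((p.1 + p.2).choose p.1 : ℝ) = (p.1 + p.2)! / (p.1 ! * p.2 !) :=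
      Nat.cast_add_choose ℝ
    rw [hchoose]
  · have := poch_ne_zero hc (p.1 + p.2)
    simp only [phi2Coeff, ← poch.eq_def]
    field_simp
  · have hsplit : poch c (p.1 + p.2) = poch c p.1 * poch (c + p.1) p.2 :=
      ascPochhammer_eval_add_index c p.1 p.2
    have hne := poch_ne_zero hc (p.1 + p.2)
    rw [hsplit] at hne ⊢
    have := left_ne_zero_of_mul hne
    have := right_ne_zero_of_mul hne
    simp only [← poch.eq_def]
    field_simp

theorem exp_mul_hyp1F1 (hc : ∀ k : ℕ, (k : ℝ) ≠ -c) :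
    Real.exp u * hyp1F1 b c (v - u) = phi2 (c - b) b c u v := by
  have hexp : Real.exp u = ∑' k : ℕ, u ^ k / (k ! : ℝ) := by
    rw [Real.exp_eq_exp_ℝ, NormedSpace.exp_eq_tsum_div]
  rw [mul_comm, hexp, hyp1F1, phi2_eq_tsum,
    tsum_mul_tsum_eq_tsum_sum_antidiagonal_of_summable_norm (summable_hyp1F1 b (v - u) hc).norm
      (Real.summable_pow_div_factorial u).norm,
    tsum_eq_tsum_sum_antidiagonal (summable_phi2 (c - b) b u v hc)]
  exact tsum_congr fun n => (sum_antidiagonal_phi2Coeff b u v hc n).symm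

end Series

section Integral

variable {c x : ℝ} (b₁ b₂ b u v : ℝ)

theorem phi2Coeff_div_add (p : ℕ × ℕ) :
    phi2Coeff b₁ b₂ c p / (c + (p.1 + p.2 : ℕ)) = phi2Coeff b₁ b₂ (c + 1) p / c := by
  have shift : poch c (p.1 + p.2) * (c + (p.1 + p.2 : ℕ)) = c * poch (c + 1) (p.1 + p.2) := by
    simp only [poch]
    rw [← ascPochhammer_succ_eval, ascPochhammer_eval_succ_left]
  calc
    _ = poch b₁ p.1 * poch b₂ p.2 /
          (poch c (p.1 + p.2) * (c + (p.1 + p.2 : ℕ)) * (p.1 ! : ℝ) * (p.2 ! : ℝ)) := by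
      rw [phi2Coeff, div_div]
      ring
    _ = _ := by
      rw [shift, phi2Coeff, div_div]
      ring

theorem integral_rpow_sub_one_mul_pow (hc : 0 < c) (hx : 0 ≤ x) (n : ℕ) :
    ∫ t in (0 : ℝ)..x, t ^ (c - 1) * t ^ n = x ^ c * x ^ n / (c + n) := by
  have hcn : 0 < c + n := by positivity
  calc
    _ = ∫ t in (0 : ℝ)..x, t ^ (c + n - 1) := by
      refine intervalIntegral.integral_congr_ae (.of_forall fun t ht => ?_)
      rw [uIoc_of_le hx] at ht
      rw [← Real.rpow_natCast, ← Real.rpow_add ht.1]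
      ring_nf
    _ = x ^ (c + n) / (c + n) := by
      rw [integral_rpow (.inl (by linarith)), sub_add_cancel, Real.zero_rpow hcn.ne', sub_zero]
    _ = _ := by rw [Real.rpow_add_natCast' hx hcn.ne']

theorem hasSum_integral_rpow_mul_phi2 (hc : 0 < c) (hx : 0 ≤ x) :
    HasSum
      (fun p : ℕ × ℕ =>
        ∫ t in (0 : ℝ)..x, t ^ (c - 1) * (phi2Coeff b₁ b₂ c p * (u * t) ^ p.1 * (v * t) ^ p.2))
      (∫ t in (0 : ℝ)..x, t ^ (c - 1) * phi2 b₁ b₂ c (u * t) (v * t)) := by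
  let term (p : ℕ × ℕ) (t : ℝ) : ℝ := phi2Coeff b₁ b₂ c p * (u * t) ^ p.1 * (v * t) ^ p.2
  have summable_term (t : ℝ) : Summable fun p => term p t :=
    summable_phi2 _ _ _ _ (natCast_ne_neg_of_pos hc)
  have norm_term_le (p : ℕ × ℕ) {t : ℝ} (ht : t ∈ Ioc 0 x) : ‖term p t‖ ≤ ‖term p x‖ := by
    have ht₀ := ht.1.le
    simp only [term, norm_mul, norm_pow, Real.norm_of_nonneg ht₀, Real.norm_of_nonneg hx]
    gcongr <;> exact ht.2
  refine intervalIntegral.hasSum_integral_of_dominated_convergence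
    (fun p t => t ^ (c - 1) * ‖term p x‖) (fun p => by fun_prop)
    (fun p => .of_forall fun t ht => ?_)
    (.of_forall fun t _ => (summable_term x).norm.mul_left _) ?_
    (.of_forall fun t _ => (summable_term t).hasSum.mul_left _)
  · rw [uIoc_of_le hx] at ht
    have hrpow := Real.rpow_nonneg ht.1.le (c - 1)
    rw [norm_mul, Real.norm_of_nonneg hrpow]
    exact mul_le_mul_of_nonneg_left (norm_term_le p ht) hrpow
  · simp only [tsum_mul_left]
    exact (intervalIntegral.intervalIntegrable_rpow' (by linarith)).mul_const _

theorem integral_rpow_mul_phi2 (hc : 0 < c) (hx : 0 ≤ x) :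
    ∫ t in (0 : ℝ)..x, t ^ (c - 1) * phi2 b₁ b₂ c (u * t) (v * t) =
      x ^ c / c * phi2 b₁ b₂ (c + 1) (u * x) (v * x) := by
  rw [← (hasSum_integral_rpow_mul_phi2 b₁ b₂ u v hc hx).tsum_eq, phi2_eq_tsum,
    ← tsum_mul_left]
  refine tsum_congr fun p => ?_
  calc
    _ = phi2Coeff b₁ b₂ c p * u ^ p.1 * v ^ p.2 *
          ∫ t in (0 : ℝ)..x, t ^ (c - 1) * t ^ (p.1 + p.2) := by
      rw [← intervalIntegral.integral_const_mul]
      congr 1 with t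
      ring
    _ = phi2Coeff b₁ b₂ c p / (c + (p.1 + p.2 : ℕ)) * x ^ c * (u * x) ^ p.1 * (v * x) ^ p.2 := by
      rw [integral_rpow_sub_one_mul_pow hc hx]
      ring
    _ = _ := by
      rw [phi2Coeff_div_add]
      ring

theorem integral_rpow_mul_exp_mul_hyp1F1 (hc : 0 < c) (hx : 0 ≤ x) :
    ∫ t in (0 : ℝ)..x, t ^ (c - 1) * (Real.exp (u * t) * hyp1F1 b c ((v - u) * t)) =
      x ^ c / c * phi2 (c - b) b (c + 1) (u * x) (v * x) := by
  simp only [sub_mul, exp_mul_hyp1F1 _ _ _ (natCast_ne_neg_of_pos hc),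
    integral_rpow_mul_phi2 _ _ _ _ hc hx]

end Integral

theorem stmt_18_general (m Kr γbar : ℝ) (hm : 0 < m) (hK : 0 ≤ Kr) (hγ : 0 < γbar)
    (x : ℝ) (hx : 0 ≤ x) :
    (∫ t in (0 : ℝ)..x,
        (m / (m + Kr)) ^ m * ((1 + Kr) / γbar) * Real.exp (-(1 + Kr) * t / γbar) *
          hyp1F1 m 1 (Kr * (1 + Kr) * t / (γbar * (m + Kr))))
      = ((1 + Kr) / γbar) * x * (m / (m + Kr)) ^ m *
          phi2 (1 - m) m 2 (-(1 + Kr) * x / γbar)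
            (-(1 + Kr) * m * x / (γbar * (m + Kr))) := by
  let u : ℝ := -(1 + Kr) / γbar
  let v : ℝ := -(1 + Kr) * m / (γbar * (m + Kr))
  have exp_arg (t : ℝ) : -(1 + Kr) * t / γbar = u * t := by ring
  have hyp_arg (t : ℝ) : Kr * (1 + Kr) * t / (γbar * (m + Kr)) = (v - u) * t := by
    simp only [u, v]
    field_simp
    ring
  have phi2_arg : -(1 + Kr) * m * x / (γbar * (m + Kr)) = v * x := by ring
  have cdf := integral_rpow_mul_exp_mul_hyp1F1 m u v one_pos hx
  norm_num only [sub_self, Real.rpow_zero, one_mul, Real.rpow_one, div_one] at cdf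
  simp only [exp_arg, hyp_arg, phi2_arg, mul_assoc _ (Real.exp _),
    intervalIntegral.integral_const_mul, cdf]
  ring

/-- CDF of the Rician Shadowed power law (positive integer `m`) in terms of Φ₂. -/
theorem stmt_18 (m : ℕ) (hm : 0 < m) (Kr γbar : ℝ) (hK : 0 ≤ Kr) (hγ : 0 < γbar) :
    ∀ x : ℝ, 0 ≤ x →
      (∫ t in (0:ℝ)..x,
          ((m : ℝ) / (m + Kr)) ^ m * ((1 + Kr) / γbar) * Real.exp (-(1 + Kr) * t / γbar) *
            hyp1F1 m 1 (Kr * (1 + Kr) * t / (γbar * (m + Kr))))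
        = ((1 + Kr) / γbar) * x * ((m : ℝ) / (m + Kr)) ^ m *
            phi2 (1 - (m : ℝ)) m 2 (-(1 + Kr) * x / γbar)
              (-(1 + Kr) * m * x / (γbar * (m + Kr))) := by
  intro x hx
  simpa only [Real.rpow_natCast] using
    stmt_18_general m Kr γbar (Nat.cast_pos.mpr hm) hK hγ x hx
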